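/- Narcissistic-avaricious theorem (Theorem 9, existence form): for every ε ∈ [3/4, 1] and every liquid democracy game, the mixed profile z in which each agent i votes herself with probability p = (1 + √(4ε − 3))/2 and delegates with probability 1−p to some i* ∈ argmax_{j∈V} u_{ij} is an ε-Nash equilibrium with SW(z) ≥ (1−ε) · OPT. -/

import Mathlib

open Finset

/-- The guru of agent `i` under pure profile `s` (where `s i = some j` means `i`
delegates to `j`, with `s i = some i` meaning `i` votes herself, and `s i = none`
meaning `i` abstains): follow delegation arcs for `n` steps; the endpoint is the
guru provided it votes itself. -/
def guru {n : ℕ} (s : Fin n → Option (Fin n)) (i : Fin n) : Option (Fin n) :=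
  ((fun o => Option.bind o s)^[n] (some i)).bind
    (fun j => if s j = some j then some j else none)

/-- Utility of agent `i` in the pure profile `s`: `u i (g i)` if the guru exists, else `0`. -/
def pureUtil {n : ℕ} (u : Fin n → Fin n → ℝ) (s : Fin n → Option (Fin n)) (i : Fin n) : ℝ :=
  (guru s i).elim 0 (u i)

/-- A mixed strategy for a single agent: nonnegative, total probability at most one
(the residual probability is abstention). -/
def IsStrat {n : ℕ} (y : Fin n → ℝ) : Prop := (∀ j, 0 ≤ y j) ∧ (∑ j, y j) ≤ 1

/-- A mixed strategy profile. -/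
def IsMixed {n : ℕ} (x : Fin n → Fin n → ℝ) : Prop := ∀ i, IsStrat (x i)

/-- Probability that the independent randomization `x` produces the pure profile `s`. -/
def prob {n : ℕ} (x : Fin n → Fin n → ℝ) (s : Fin n → Option (Fin n)) : ℝ :=
  ∏ i, (s i).elim (1 - ∑ j, x i j) (x i)

/-- Expected utility of agent `i` under the mixed profile `x`. -/
def util {n : ℕ} (u x : Fin n → Fin n → ℝ) (i : Fin n) : ℝ :=
  ∑ s : Fin n → Option (Fin n), prob x s * pureUtil u s i

/-- Expected social welfare of the mixed profile `x`. -/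
def SW {n : ℕ} (u x : Fin n → Fin n → ℝ) : ℝ := ∑ i, util u x i

/-- The set of social-welfare values achievable by mixed profiles; `OPT` is its greatest element. -/
def SWvals {n : ℕ} (u : Fin n → Fin n → ℝ) : Set ℝ :=
  {w | ∃ x, IsMixed x ∧ w = SW u x}

/-- `x` is an `ε`-Nash equilibrium. -/
def EpsNash {n : ℕ} (u : Fin n → Fin n → ℝ) (ε : ℝ) (x : Fin n → Fin n → ℝ) : Prop :=
  ∀ i y, IsStrat y → util u x i ≥ (1 - ε) * util u (Function.update x i y) i

/-- `x` is an (exact, mixed) Nash equilibrium. -/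
def NashEq {n : ℕ} (u x : Fin n → Fin n → ℝ) : Prop :=
  ∀ i y, IsStrat y → util u x i ≥ util u (Function.update x i y) i

/-- The narcissistic-avaricious profile: each agent i votes herself with
probability p and delegates to istar i with probability 1 - p. -/
def nazProfile {n : ℕ} (p : ℝ) (istar : Fin n → Fin n) : Fin n → Fin n → ℝ :=
  fun i j => (if j = i then p else 0) + (if j = istar i then 1 - p else 0)

/-!
No mixed profile gives agent `i` more than her best utility `u i (istar i)`, since her expected
utility is an average of values at most that large. On the other hand `istar i` is the guru of `i`
as soon as `i` and `istar i` both choose `istar i`. Choices are independent, so in the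
narcissistic-avaricious profile this happens with probability at least `p * (1 - p)`, and every
agent secures that fraction of her best utility. The value `p = (1 + √(4 * ε - 3)) / 2` is the
larger root of `p * (1 - p) = 1 - ε`.
-/

section Probability

variable {n : ℕ} {x : Fin n → Fin n → ℝ} {y : Fin n → ℝ}

/-- The probability that an agent playing the mixed strategy `y` makes the pure choice `o`, where
`none` stands for abstention; the factors of `prob`. -/
def choiceProb (y : Fin n → ℝ) (o : Option (Fin n)) : ℝ :=
  o.elim (1 - ∑ j, y j) y

lemma choiceProb_nonneg (hy : IsStrat y) (o : Option (Fin n)) : 0 ≤ choiceProb y o := by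
  cases o with
  | none => exact sub_nonneg.2 hy.2
  | some j => exact hy.1 j

lemma sum_choiceProb (y : Fin n → ℝ) : ∑ o, choiceProb y o = 1 := by
  simp [choiceProb, Fintype.sum_option]

lemma prob_nonneg (hx : IsMixed x) (s : Fin n → Option (Fin n)) : 0 ≤ prob x s :=
  prod_nonneg fun i _ => choiceProb_nonneg (hx i) (s i)

lemma sum_prob_piFinset (x : Fin n → Fin n → ℝ) (A : Fin n → Finset (Option (Fin n))) :
    ∑ s ∈ Fintype.piFinset A, prob x s = ∏ i, ∑ o ∈ A i, choiceProb (x i) o :=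
  (prod_univ_sum A fun i => choiceProb (x i)).symm

lemma sum_prob (x : Fin n → Fin n → ℝ) : ∑ s, prob x s = 1 := by
  simpa only [Fintype.piFinset_univ, sum_choiceProb, prod_const_one]
    using sum_prob_piFinset x fun _ => univ

lemma sum_prob_filter_choose (x : Fin n → Fin n → ℝ) (t : Finset (Fin n)) (k : Fin n → Fin n) :
    ∑ s with ∀ l ∈ t, s l = some (k l), prob x s = ∏ l ∈ t, x l (k l) := by
  let A : Fin n → Finset (Option (Fin n)) := fun l => if l ∈ t then {some (k l)} else univ
  have hA : ({s | ∀ l ∈ t, s l = some (k l)} : Finset (Fin n → Option (Fin n))) =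
      Fintype.piFinset A := by
    ext s
    simp only [mem_filter_univ, Fintype.mem_piFinset, A]
    refine forall_congr' fun l => ?_
    split_ifs with hl <;> simp [hl]
  have hsum (l : Fin n) :
      ∑ o ∈ A l, choiceProb (x l) o = if l ∈ t then x l (k l) else 1 := by
    by_cases hl : l ∈ t
    · simp [A, hl, choiceProb]
    · simp only [A, hl, if_false, sum_choiceProb]
  rw [hA, sum_prob_piFinset, prod_congr rfl fun l _ => hsum l, Fintype.prod_ite_mem]

lemma IsMixed.update (hx : IsMixed x) (i : Fin n) (hy : IsStrat y) :
    IsMixed (Function.update x i y) :=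
  (Function.forall_update_iff x fun _ => IsStrat).2 ⟨hy, fun j _ => hx j⟩

end Probability

lemma iterate_eq_of_isFixedPt {α : Type*} {f : α → α} {a b : α} {m n : ℕ} (hmn : m ≤ n)
    (hab : f^[m] a = b) (hb : Function.IsFixedPt f b) : f^[n] a = b := by
  rw [← Nat.sub_add_cancel hmn, Function.iterate_add_apply, hab]
  exact hb.iterate _

section Utility

variable {n : ℕ} {u x : Fin n → Fin n → ℝ} {i : Fin n} {c : ℝ}

lemma guru_eq_some_of_iterate {s : Fin n → Option (Fin n)} {i k : Fin n} {m : ℕ} (hm : m ≤ n)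
    (hik : (fun o => Option.bind o s)^[m] (some i) = some k) (hk : s k = some k) :
    guru s i = some k := by
  have hiter : (fun o => Option.bind o s)^[n] (some i) = some k :=
    iterate_eq_of_isFixedPt hm hik hk
  simp [guru, hiter, hk]

lemma pureUtil_nonneg (hu : ∀ j, 0 ≤ u i j) (s : Fin n → Option (Fin n)) :
    0 ≤ pureUtil u s i := by
  unfold pureUtil
  cases guru s i with
  | none => exact le_rfl
  | some j => exact hu j

lemma pureUtil_le (hc : 0 ≤ c) (hu : ∀ j, u i j ≤ c) (s : Fin n → Option (Fin n)) :
    pureUtil u s i ≤ c := by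
  unfold pureUtil
  cases guru s i with
  | none => exact hc
  | some j => exact hu j

lemma util_nonneg (hx : IsMixed x) (hu : ∀ j, 0 ≤ u i j) : 0 ≤ util u x i :=
  sum_nonneg fun s _ => mul_nonneg (prob_nonneg hx s) (pureUtil_nonneg hu s)

lemma util_le (hx : IsMixed x) (hc : 0 ≤ c) (hu : ∀ j, u i j ≤ c) : util u x i ≤ c :=
  calc util u x i
      ≤ ∑ s, prob x s * c :=
        sum_le_sum fun s _ => mul_le_mul_of_nonneg_left (pureUtil_le hc hu s) (prob_nonneg hx s)
    _ = c := by rw [← sum_mul, sum_prob, one_mul]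

lemma sum_prob_mul_le_util (hx : IsMixed x) (hu : ∀ j, 0 ≤ u i j)
    {E : Finset (Fin n → Option (Fin n))} (hE : ∀ s ∈ E, c ≤ pureUtil u s i) :
    (∑ s ∈ E, prob x s) * c ≤ util u x i :=
  calc (∑ s ∈ E, prob x s) * c
      = ∑ s ∈ E, prob x s * c := sum_mul ..
    _ ≤ ∑ s ∈ E, prob x s * pureUtil u s i :=
        sum_le_sum fun s hs => mul_le_mul_of_nonneg_left (hE s hs) (prob_nonneg hx s)
    _ ≤ util u x i :=
        sum_le_univ_sum_of_nonneg fun s => mul_nonneg (prob_nonneg hx s) (pureUtil_nonneg hu s)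

-- The product over the set `{i, k}`, rather than `x i k * x k k`, also covers the case `i = k`.
lemma prod_pair_mul_le_util (hx : IsMixed x) (hu : ∀ j, 0 ≤ u i j) (k : Fin n) :
    (∏ l ∈ {i, k}, x l k) * u i k ≤ util u x i := by
  rw [← sum_prob_filter_choose x {i, k} fun _ => k]
  refine sum_prob_mul_le_util hx hu fun s hs => ?_
  obtain ⟨hi, hk⟩ : s i = some k ∧ s k = some k := by simpa using hs
  have hguru : guru s i = some k := guru_eq_some_of_iterate (m := 1) i.pos hi hk
  simp [pureUtil, hguru]

end Utility

section NazProfile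

variable {n : ℕ} {p : ℝ}

lemma isMixed_nazProfile (hp0 : 0 ≤ p) (hp1 : p ≤ 1) (istar : Fin n → Fin n) :
    IsMixed (nazProfile p istar) := by
  refine fun i => ⟨fun j => ?_, ?_⟩
  · unfold nazProfile
    split_ifs <;> linarith
  · simp [nazProfile, sum_add_distrib]

lemma le_nazProfile_self (hp1 : p ≤ 1) (istar : Fin n → Fin n) (i : Fin n) :
    p ≤ nazProfile p istar i i := by
  rw [nazProfile, if_pos rfl]
  split_ifs <;> linarith

lemma le_nazProfile_istar (hp0 : 0 ≤ p) (istar : Fin n → Fin n) (i : Fin n) :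
    1 - p ≤ nazProfile p istar i (istar i) := by
  rw [nazProfile, if_pos (rfl : istar i = istar i)]
  split_ifs <;> linarith

lemma mul_le_prod_pair_nazProfile (hp0 : 0 ≤ p) (hp1 : p ≤ 1) (istar : Fin n → Fin n)
    (i : Fin n) : p * (1 - p) ≤ ∏ l ∈ {i, istar i}, nazProfile p istar l (istar i) := by
  have hself := le_nazProfile_self hp1 istar (istar i)
  by_cases hi : i = istar i
  · rw [← hi, pair_eq_singleton, prod_singleton]
    rw [← hi] at hself
    exact (mul_le_of_le_one_right hp0 (sub_le_self 1 hp0)).trans hself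
  · rw [prod_pair hi, mul_comm p]
    have hq : 0 ≤ 1 - p := sub_nonneg.2 hp1
    have hstar := le_nazProfile_istar hp0 istar i
    exact mul_le_mul hstar hself hp0 (hq.trans hstar)

lemma mul_le_util_nazProfile (hp0 : 0 ≤ p) (hp1 : p ≤ 1) {u : Fin n → Fin n → ℝ} {i : Fin n}
    (hu : ∀ j, 0 ≤ u i j) (istar : Fin n → Fin n) :
    p * (1 - p) * u i (istar i) ≤ util u (nazProfile p istar) i :=
  (mul_le_mul_of_nonneg_right (mul_le_prod_pair_nazProfile hp0 hp1 istar i) (hu _)).trans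
    (prod_pair_mul_le_util (isMixed_nazProfile hp0 hp1 istar) hu (istar i))

end NazProfile

lemma half_one_add_sqrt_mem_Icc {a : ℝ} (ha : a ≤ 1) : (1 + √a) / 2 ∈ Set.Icc (0 : ℝ) 1 := by
  have hsqrt : √a ≤ 1 := Real.sqrt_le_one.2 ha
  exact ⟨by positivity, by linarith⟩

lemma half_one_add_sqrt_mul_one_sub {a : ℝ} (ha : 0 ≤ a) :
    (1 + √a) / 2 * (1 - (1 + √a) / 2) = (1 - a) / 4 := by
  linear_combination (-1 / 4) * Real.sq_sqrt ha

theorem stmt17_general {n : ℕ} {ε p : ℝ} (hp : p ∈ Set.Icc (0 : ℝ) 1) (hεp : 1 - ε ≤ p * (1 - p))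
    {u : Fin n → Fin n → ℝ} (hu : ∀ i j, 0 ≤ u i j)
    {istar : Fin n → Fin n} (histar : ∀ i j, u i j ≤ u i (istar i)) :
    EpsNash u ε (nazProfile p istar) ∧
      ∀ w ∈ SWvals u, SW u (nazProfile p istar) ≥ (1 - ε) * w := by
  obtain ⟨hp0, hp1⟩ := hp
  have hpq : 0 ≤ p * (1 - p) := mul_nonneg hp0 (sub_nonneg.2 hp1)
  have hutil {x} (hx : IsMixed x) (i : Fin n) :
      (1 - ε) * util u x i ≤ util u (nazProfile p istar) i :=
    calc (1 - ε) * util u x i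
        ≤ p * (1 - p) * util u x i := mul_le_mul_of_nonneg_right hεp (util_nonneg hx (hu i))
      _ ≤ p * (1 - p) * u i (istar i) :=
          mul_le_mul_of_nonneg_left (util_le hx (hu i _) (histar i)) hpq
      _ ≤ util u (nazProfile p istar) i := mul_le_util_nazProfile hp0 hp1 (hu i) istar
  refine ⟨fun i y hy => hutil ((isMixed_nazProfile hp0 hp1 istar).update i hy) i, ?_⟩
  rintro _ ⟨x, hx, rfl⟩
  rw [SW, SW, mul_sum]
  exact sum_le_sum fun i _ => hutil hx i

/-- Narcissistic-avaricious theorem: for ε ∈ [3/4, 1], the profile in which every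
agent votes herself with probability p = (1 + √(4ε-3))/2 and delegates to a
myopically best agent i* with probability 1-p is an ε-Nash equilibrium with
SW ≥ (1-ε)·OPT. -/
theorem stmt17 {n : ℕ} (ε : ℝ) (hε : ε ∈ Set.Icc (3/4 : ℝ) 1)
    (u : Fin n → Fin n → ℝ) (hu : ∀ i j, 0 ≤ u i j ∧ u i j ≤ 1)
    (istar : Fin n → Fin n) (histar : ∀ i j, u i j ≤ u i (istar i))
    (OPT : ℝ) (hOPT : IsGreatest (SWvals u) OPT) :
    EpsNash u ε (nazProfile ((1 + Real.sqrt (4*ε - 3))/2) istar) ∧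
    SW u (nazProfile ((1 + Real.sqrt (4*ε - 3))/2) istar) ≥ (1-ε) * OPT := by
  have hp := half_one_add_sqrt_mem_Icc (a := 4 * ε - 3) (by linarith [hε.2])
  have hroot := half_one_add_sqrt_mul_one_sub (a := 4 * ε - 3) (by linarith [hε.1])
  exact (stmt17_general hp (by linarith) (fun i j => (hu i j).1) histar).imp_right (· OPT hOPT.1)
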